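/- Let A = [a_1, ..., a_n] ∈ ℝ^{m×n} be nonzero with 0 in the interior of conv{a_1,...,a_n}. Then for every x ≥ 0 with Ax ≠ 0, φ(A, x) ≥ |ρ(A)| + ‖Ax‖₂/‖x‖₁, and consequently φ(A) ≥ |ρ(A)|. -/

import Mathlib

open scoped RealInnerProductSpace BigOperators

/-- `comb a x = A x`, the combination `∑ i, x i • a i` of the columns `a i` of `A`. -/
noncomputable def comb {m n : ℕ} (a : Fin n → EuclideanSpace ℝ (Fin m)) (x : Fin n → ℝ) :
    EuclideanSpace ℝ (Fin m) := ∑ i, x i • a i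

/-- `φ(A, x) = sup {λ > 0 : ∃ u v ∈ Δ_{n-1}, S(u) ⊆ S(x), Au - Av = (λ/‖Ax‖) Ax}`. -/
noncomputable def phiAt {m n : ℕ} (a : Fin n → EuclideanSpace ℝ (Fin m))
    (x : Fin n → ℝ) : ℝ :=
  sSup {lam : ℝ | 0 < lam ∧ ∃ u ∈ stdSimplex ℝ (Fin n), ∃ v ∈ stdSimplex ℝ (Fin n),
    (∀ i, 0 < u i → 0 < x i) ∧
    comb a u - comb a v = (lam / ‖comb a x‖) • comb a x}

/-- The restricted width `φ(A) = min {φ(A, x) : x ≥ 0, Ax ≠ 0}`. -/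
noncomputable def phi {m n : ℕ} (a : Fin n → EuclideanSpace ℝ (Fin m)) : ℝ :=
  sInf {t : ℝ | ∃ x : Fin n → ℝ, (∀ i, 0 ≤ x i) ∧ comb a x ≠ 0 ∧ t = phiAt a x}

noncomputable def combL {m n : ℕ} (a : Fin n → EuclideanSpace ℝ (Fin m)) :
    (Fin n → ℝ) →ₗ[ℝ] EuclideanSpace ℝ (Fin m) where
  toFun := comb a
  map_add' x y := by simp [comb, add_smul, Finset.sum_add_distrib]
  map_smul' c x := by simp [comb, mul_smul, Finset.smul_sum]

lemma comb_smul' {m n : ℕ} (a : Fin n → EuclideanSpace ℝ (Fin m)) (c : ℝ) (x : Fin n → ℝ) :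
    comb a (c • x) = c • comb a x := (combL a).map_smul c x

lemma comb_single' {m n : ℕ} (a : Fin n → EuclideanSpace ℝ (Fin m)) (i : Fin n) :
    comb a (Pi.single i 1) = a i := by
  simp [comb, Pi.single_apply, ite_smul]

lemma comb_bound {m n : ℕ} (a : Fin n → EuclideanSpace ℝ (Fin m)) (x : Fin n → ℝ)
    (hx : x ∈ stdSimplex ℝ (Fin n)) : ‖comb a x‖ ≤ ∑ i, ‖a i‖ := by
  unfold comb
  refine (norm_sum_le _ _).trans (Finset.sum_le_sum fun i _ => ?_)
  rw [norm_smul, Real.norm_eq_abs, abs_of_nonneg (hx.1 i)]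
  have : x i ≤ 1 := by
    rw [← hx.2]
    exact Finset.single_le_sum (fun j _ => hx.1 j) (Finset.mem_univ i)
  exact mul_le_of_le_one_left (norm_nonneg _) this

/-- if `A` is nonzero and `0 ∈ int(conv(A))`, then for every `x ≥ 0` with
`Ax ≠ 0`, `φ(A, x) ≥ |ρ(A)| + ‖Ax‖/‖x‖₁`, and consequently `φ(A) ≥ |ρ(A)|`. -/
theorem stmt14 (m n : ℕ) (hn : 0 < n) (a : Fin n → EuclideanSpace ℝ (Fin m))
    (hA : ∃ i, a i ≠ 0)
    (h0 : (0 : EuclideanSpace ℝ (Fin m)) ∈ interior (convexHull ℝ (Set.range a)))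
    (ρ : ℝ)
    (hρ : IsGreatest
      {t : ℝ | ∃ z : EuclideanSpace ℝ (Fin m), ‖z‖ = 1 ∧ t = ⨅ i : Fin n, ⟪a i, z⟫} ρ) :
    (∀ x : Fin n → ℝ, (∀ i, 0 ≤ x i) → comb a x ≠ 0 →
      |ρ| + ‖comb a x‖ / (∑ i, x i) ≤ phiAt a x) ∧
    |ρ| ≤ phi a := by
  haveI : Nonempty (Fin n) := ⟨⟨0, hn⟩⟩
  set C : Set (EuclideanSpace ℝ (Fin m)) := (combL a) '' stdSimplex ℝ (Fin n) with hC
  have hCconv : Convex ℝ C := (convex_stdSimplex ℝ (Fin n)).linear_image _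
  have hCcl : IsClosed C :=
    ((isCompact_stdSimplex ℝ (Fin n)).image (combL a).continuous_of_finiteDimensional).isClosed
  have haC : ∀ i, a i ∈ C := fun i =>
    ⟨Pi.single i 1, single_mem_stdSimplex ℝ i, comb_single' a i⟩
  have h0C : (0 : EuclideanSpace ℝ (Fin m)) ∈ C := by
    refine convexHull_min ?_ hCconv (interior_subset h0)
    rintro _ ⟨i, rfl⟩
    exact haC i
  have hinf : ∀ (z : EuclideanSpace ℝ (Fin m)) (i : Fin n),
      (⨅ j : Fin n, ⟪a j, z⟫) ≤ ⟪a i, z⟫ := fun z i =>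
    ciInf_le (Set.finite_range _).bddBelow i
  have hρ0 : ρ ≤ 0 := by
    obtain ⟨z, hz, hr⟩ := hρ.1
    obtain ⟨c, hc, hc0⟩ := h0C
    have h1 : ∑ i, c i * ρ ≤ ∑ i, c i * ⟪a i, z⟫ := Finset.sum_le_sum fun i _ =>
      mul_le_mul_of_nonneg_left (hr ▸ hinf z i) (hc.1 i)
    rw [← Finset.sum_mul, hc.2, one_mul] at h1
    have h2 : ∑ i, c i * ⟪a i, z⟫ = ⟪comb a c, z⟫ := by
      simp [comb, sum_inner, real_inner_smul_left]
    have h3 : comb a c = 0 := hc0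
    rw [h2, h3, inner_zero_left] at h1
    exact h1
  have key : ∀ w : EuclideanSpace ℝ (Fin m), ‖w‖ = 1 → ρ • w ∈ C := by
    intro w hw
    by_contra hne
    obtain ⟨f, s, hf1, hf2⟩ := geometric_hahn_banach_point_closed hCconv hCcl hne
    set y := (InnerProductSpace.toDual ℝ (EuclideanSpace ℝ (Fin m))).symm f with hy
    have hfy : ∀ t, f t = ⟪t, y⟫ := fun t => by
      rw [real_inner_comm, hy, InnerProductSpace.toDual_symm_apply]
    have hy0 : y ≠ 0 := by
      intro h
      have h1 := hf2 _ h0C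
      rw [hfy, h, inner_zero_right] at hf1
      rw [hfy, h, inner_zero_right] at h1
      linarith
    have hyp : 0 < ‖y‖ := norm_pos_iff.2 hy0
    have hz1 : ‖(‖y‖⁻¹ • y)‖ = 1 := by
      rw [norm_smul, norm_inv, norm_norm, inv_mul_cancel₀ hyp.ne']
    have hle := hρ.2 ⟨‖y‖⁻¹ • y, hz1, rfl⟩
    obtain ⟨i, hi⟩ := exists_eq_ciInf_of_finite (f := fun i : Fin n => ⟪a i, ‖y‖⁻¹ • y⟫)
    rw [← hi] at hle
    have h1 := hf2 _ (haC i)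
    rw [hfy] at h1 hf1
    rw [real_inner_smul_left] at hf1
    simp only [real_inner_smul_right] at hle
    have h2 : ⟪w, y⟫ ≤ ‖y‖ := by
      have := real_inner_le_norm w y
      rwa [hw, one_mul] at this
    have h3 : ⟪a i, y⟫ ≤ ρ * ‖y‖ := by
      rw [inv_mul_le_iff₀ hyp] at hle
      linarith
    have h4 := mul_le_mul_of_nonpos_left h2 hρ0
    linarith
  have main : ∀ x : Fin n → ℝ, (∀ i, 0 ≤ x i) → comb a x ≠ 0 →
      |ρ| + ‖comb a x‖ / (∑ i, x i) ≤ phiAt a x := by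
    intro x hx hax
    have hN : 0 < ‖comb a x‖ := norm_pos_iff.2 hax
    have hS : 0 < ∑ i, x i := by
      refine lt_of_le_of_ne (Finset.sum_nonneg fun i _ => hx i) fun h => hax ?_
      have := (Finset.sum_eq_zero_iff_of_nonneg fun i _ => hx i).1 h.symm
      unfold comb
      exact Finset.sum_eq_zero fun i hi => by rw [this i hi, zero_smul]
    apply le_csSup
    · refine ⟨2 * ∑ i, ‖a i‖, ?_⟩
      rintro l ⟨hl, u, hu, v, hv, -, h⟩
      have h1 := congrArg norm h
      rw [norm_smul, Real.norm_eq_abs, abs_of_pos (div_pos hl hN), div_mul_cancel₀ _ hN.ne'] at h1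
      have := norm_sub_le (comb a u) (comb a v)
      linarith [comb_bound a u hu, comb_bound a v hv]
    · obtain ⟨v, hv, hv2⟩ := key (‖comb a x‖⁻¹ • comb a x)
        (by rw [norm_smul, norm_inv, norm_norm, inv_mul_cancel₀ hN.ne'])
      have hv3 : comb a v = ρ • ‖comb a x‖⁻¹ • comb a x := hv2
      refine ⟨by positivity, (∑ i, x i)⁻¹ • x, ⟨fun i => ?_, ?_⟩, v, hv, fun i hi => ?_, ?_⟩
      · exact mul_nonneg (inv_nonneg.2 hS.le) (hx i)
      · simp only [Pi.smul_apply, smul_eq_mul]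
        rw [← Finset.mul_sum, inv_mul_cancel₀ hS.ne']
      · exact (pos_iff_pos_of_mul_pos hi).1 (inv_pos.2 hS)
      · rw [comb_smul', hv3, smul_smul, ← sub_smul, abs_of_nonpos hρ0]
        congr 1
        field_simp
        ring
  refine ⟨main, ?_⟩
  apply le_csInf
  · obtain ⟨i, hi⟩ := hA
    refine ⟨_, Pi.single i 1, (single_mem_stdSimplex ℝ i).1, ?_, rfl⟩
    rwa [comb_single']
  · rintro _ ⟨x, hx, hax, rfl⟩
    have := main x hx hax
    have h2 : 0 ≤ ‖comb a x‖ / (∑ i, x i) :=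
      div_nonneg (norm_nonneg _) (Finset.sum_nonneg fun i _ => hx i)
    linarith
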